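/- Let S and Q be finite nonempty types, P : S → PMF S a Markov chain transition function, L : S → W a labelling, δ : Q → W → Q a deterministic automaton transition function, and q* ∈ Q. Let (μ_s)_{s∈S} be a trajectory measure family for (S, P), and let (ν_{(s,q)}) be a trajectory measure family for the product Markov chain on S × Q whose transitions are T'(s₁, q₁)(s₂, q₂) = P s₁ s₂ if δ q₁ (L s₁) = q₂ and 0 otherwise. Define Φ : (ℕ → S) → (ℕ → S × Q) by Φ(ω)(n) = (ω n, ρ_ω n), where ρ_ω 0 = q* and ρ_ω (n+1) = δ (ρ_ω n) (L (ω n)). Then for every s ∈ S, the pushforward of μ_s under Φ equals ν_{(s, q*)}. -/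

import Mathlib

open scoped ENNReal

/-- A trajectory measure family for a Markov chain with transition
probabilities `P` (values in `ℝ≥0∞`). -/
def IsTrajectoryMeasureFamily {X : Type*} [MeasurableSpace X] [DecidableEq X]
    (P : X → X → ℝ≥0∞) (μ : X → MeasureTheory.Measure (ℕ → X)) : Prop :=
  ∀ x : X, MeasureTheory.IsProbabilityMeasure (μ x) ∧
    ∀ (n : ℕ) (f : ℕ → X),
      μ x {ω | ∀ k ≤ n, ω k = f k} =
        if f 0 = x then ∏ k ∈ Finset.range n, P (f k) (f (k + 1)) else 0

/-- The run of the deterministic automaton `(δ, q*)` along the labels of a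
trajectory `ω`: `ρ 0 = q*`, `ρ (n+1) = δ (ρ n) (L (ω n))`. -/
def autRun {S Q W : Type*} (δ : Q → W → Q) (L : S → W) (qstar : Q)
    (ω : ℕ → S) : ℕ → Q
  | 0 => qstar
  | n + 1 => δ (autRun δ L qstar ω n) (L (ω n))

open MeasureTheory in
theorem measure_ext_of_cylinders {X : Type*} [MeasurableSpace X] [Countable X]
    [MeasurableSingletonClass X] (μ ν : Measure (ℕ → X)) [IsFiniteMeasure μ]
    (h : ∀ (n : ℕ) (f : ℕ → X), μ {ω | ∀ k ≤ n, ω k = f k} = ν {ω | ∀ k ≤ n, ω k = f k}) :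
    μ = ν := by
  have h1 : ∀ n : ℕ, μ.map (Finset.Iic n).restrict = ν.map (Finset.Iic n).restrict := by
    intro n
    refine Measure.ext_of_singleton fun g => ?_
    rw [Measure.map_apply (Finset.measurable_restrict _) (measurableSet_singleton _),
      Measure.map_apply (Finset.measurable_restrict _) (measurableSet_singleton _)]
    have e : (Finset.Iic n).restrict (π := fun _ => X) ⁻¹' {g} =
        {ω : ℕ → X | ∀ k ≤ n, ω k =
          (fun k => if hk : k ∈ Finset.Iic n then g ⟨k, hk⟩ else g ⟨0, by simp⟩) k} := by
      ext ω
      simp only [Set.mem_preimage, Set.mem_singleton_iff, Set.mem_ofPred_eq, funext_iff]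
      constructor
      · intro H k hk
        have hk' : k ∈ Finset.Iic n := by simpa using hk
        have := H ⟨k, hk'⟩
        simpa [hk] using this
      · rintro H ⟨k, hk⟩
        have := H k (by simpa using hk)
        rw [dif_pos hk] at this
        exact this
    rw [e]
    exact h n _
  have h2 : ∀ I : Finset ℕ, ν.map I.restrict = μ.map I.restrict := by
    intro I
    have hI : I ⊆ Finset.Iic (I.sup id) := fun k hk => by
      simpa using Finset.le_sup (f := id) hk
    rw [← Finset.restrict₂_comp_restrict hI,
      ← Measure.map_map (Finset.measurable_restrict₂ hI) (Finset.measurable_restrict _),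
      ← Measure.map_map (Finset.measurable_restrict₂ hI) (Finset.measurable_restrict _), h1]
  have (I : Finset ℕ) : IsFiniteMeasure (μ.map I.restrict) := inferInstance
  exact IsProjectiveLimit.unique (P := fun I : Finset ℕ => μ.map I.restrict)
    (fun I => rfl) h2

theorem autRun_cylinder_iff {S Q W : Type*} (δ : Q → W → Q) (L : S → W) (qstar : Q)
    (ω : ℕ → S) (f : ℕ → S × Q) (n : ℕ) :
    (∀ k ≤ n, (ω k, autRun δ L qstar ω k) = f k) ↔
      (∀ k ≤ n, ω k = (f k).1) ∧ (f 0).2 = qstar ∧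
        ∀ k < n, δ (f k).2 (L (f k).1) = (f (k + 1)).2 := by
  constructor
  · intro H
    refine ⟨fun k hk => by rw [← H k hk], by rw [← H 0 (Nat.zero_le _)]; rfl, fun k hk => ?_⟩
    rw [← H k hk.le, ← H (k + 1) hk]
    rfl
  · rintro ⟨H1, H2, H3⟩ k
    induction k with
    | zero => intro hk; exact Prod.ext (H1 0 hk) H2.symm
    | succ k ih =>
      intro hk
      refine Prod.ext (H1 _ hk) ?_
      have := ih (by omega)
      rw [← H3 k (by omega), ← this]
      rfl

open MeasureTheory in
/-- the pushforward of the trajectory measure of a Markov chain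
under the map pairing a trajectory with the induced automaton run equals the
trajectory measure of the product Markov chain started at `(s, q*)`. -/
theorem trajectory_measure_map_eq_product {S Q W : Type*}
    [Fintype S] [Nonempty S] [DecidableEq S]
    [Fintype Q] [Nonempty Q] [DecidableEq Q]
    (P : S → PMF S) (L : S → W) (δ : Q → W → Q) (qstar : Q) :
    letI : MeasurableSpace S := ⊤
    letI : MeasurableSpace Q := ⊤
    ∀ (μ : S → MeasureTheory.Measure (ℕ → S))
      (ν : S × Q → MeasureTheory.Measure (ℕ → S × Q)),
      IsTrajectoryMeasureFamily (fun a b => P a b) μ →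
      IsTrajectoryMeasureFamily
        (fun p q : S × Q => if δ p.2 (L p.1) = q.2 then P p.1 q.1 else 0) ν →
      ∀ s : S,
        MeasureTheory.Measure.map
          (fun ω n => (ω n, autRun δ L qstar ω n)) (μ s) = ν (s, qstar) := by
  letI : MeasurableSpace S := ⊤
  letI : MeasurableSpace Q := ⊤
  intro μ ν hμ hν s
  haveI : IsProbabilityMeasure (μ s) := (hμ s).1
  have hΦ : Measurable (fun (ω : ℕ → S) (n : ℕ) => (ω n, autRun δ L qstar ω n)) := by
    have hrun : ∀ n, Measurable (fun ω : ℕ → S => autRun δ L qstar ω n) := by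
      intro n
      induction n with
      | zero => exact measurable_const
      | succ n ih =>
        exact (measurable_of_countable (fun p : Q × S => δ p.1 (L p.2))).comp
          (ih.prodMk (measurable_pi_apply n))
    exact measurable_pi_lambda _ fun n => (measurable_pi_apply n).prodMk (hrun n)
  apply measure_ext_of_cylinders
  intro n f
  have hms : MeasurableSet {ω : ℕ → S × Q | ∀ k ≤ n, ω k = f k} := by
    have : {ω : ℕ → S × Q | ∀ k ≤ n, ω k = f k} =
        ⋂ k, ⋂ (_ : k ≤ n), (fun ω : ℕ → S × Q => ω k) ⁻¹' {f k} := by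
      ext; simp
    rw [this]
    exact MeasurableSet.iInter fun k => MeasurableSet.iInter fun _ =>
      measurable_pi_apply k (measurableSet_singleton _)
  rw [Measure.map_apply hΦ hms, (hν (s, qstar)).2 n f]
  simp only [Set.preimage_setOf_eq, autRun_cylinder_iff]
  by_cases hq : (f 0).2 = qstar
  · by_cases hr : ∀ k < n, δ (f k).2 (L (f k).1) = (f (k + 1)).2
    · have e : {ω : ℕ → S | (∀ k ≤ n, ω k = (f k).1) ∧ (f 0).2 = qstar ∧
          ∀ k < n, δ (f k).2 (L (f k).1) = (f (k + 1)).2} =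
          {ω | ∀ k ≤ n, ω k = (fun k => (f k).1) k} := by
        ext ω
        exact ⟨fun h => h.1, fun h => ⟨h, hq, hr⟩⟩
      rw [e, (hμ s).2 n]
      have e2 : f 0 = (s, qstar) ↔ (f 0).1 = s := by
        simp [Prod.ext_iff, hq]
      simp only [e2]
      congr 1
      exact Finset.prod_congr rfl fun k hk => by rw [if_pos (hr k (Finset.mem_range.1 hk))]
    · have e : {ω : ℕ → S | (∀ k ≤ n, ω k = (f k).1) ∧ (f 0).2 = qstar ∧
          ∀ k < n, δ (f k).2 (L (f k).1) = (f (k + 1)).2} = ∅ :=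
        Set.eq_empty_of_forall_notMem fun ω h => hr h.2.2
      rw [e, measure_empty]
      push Not at hr
      obtain ⟨k, hk, hne⟩ := hr
      rw [Finset.prod_eq_zero (Finset.mem_range.2 hk) (if_neg hne), ite_self]
  · have e : {ω : ℕ → S | (∀ k ≤ n, ω k = (f k).1) ∧ (f 0).2 = qstar ∧
          ∀ k < n, δ (f k).2 (L (f k).1) = (f (k + 1)).2} = ∅ :=
      Set.eq_empty_of_forall_notMem fun ω h => hq h.2.1
    rw [e, measure_empty, if_neg]
    intro h
    exact hq (by rw [h])
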